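/- Let p > 3 be a prime with p ≡ 3 (mod 4) and let n be a positive integer divisible by p. Then n is a sum of k squares of integers none divisible by p, for some k ∈ {3, 4}. -/

import Mathlib

/-!
A primitive representation of `m` as a sum of three squares exists for `m ≡ 1, 3, 5 (mod 8)` and for
`m ≡ 2 (mod 4)`: Dirichlet's theorem and quadratic reciprocity supply a positive ternary form of
determinant one that primitively represents `m`, and reduction shows that such a form is a sum of
three squares of linear forms.

Since `-1` is not a square modulo `p`, the quadratic form `x ⬝ᵥ x` is anisotropic on `𝔽ₚ²`, and also
on the plane `w⊥` in `𝔽ₚ³` as soon as `w ⬝ᵥ w` is a nonzero square. Hence a primitive representation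
of a multiple of `p` by three squares has no term divisible by `p`. Factors `4 = 2 ^ 2` can be
removed, so this leaves `n ≡ 7 (mod 8)`, where four squares are needed.

In that case take a primitive integral quaternion of norm `N * n` whose real part is divisible by
`p` and write it as `x * star v` with `v` of norm `N`. Then `x` has norm `n` and is orthogonal to
`v` modulo `p`, so no coordinate of `x` is divisible by `p` provided that every `N - vᵢ ^ 2` is a
nonzero square modulo `p`. Depending on which of `2`, `3`, `5` are squares, `N = 2`, `4`, `5` or
`10` works: if none of them is, then `6` and `10` are. The real part is `p` for `N = 4` and `0`
otherwise.
-/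

open Matrix Quaternion
open scoped NumberTheorySymbols

theorem exists_four_mul_sq_le (t : ℤ) {a : ℤ} (ha : 0 < a) : ∃ k, 4 * (a * k + t) ^ 2 ≤ a ^ 2 := by
  lift a to ℕ using ha.le
  obtain ⟨k, hk⟩ := Int.dvd_bmod_sub_self (x := t) (m := a)
  have hlow := Int.le_bmod (x := t) (m := a) (by lia)
  have hupp := Int.bmod_lt (x := t) (m := a) (by lia)
  refine ⟨k, ?_⟩
  linarith [sq_le_sq' (a := 2 * (a * k + t)) (b := a) (by lia) (by lia)]

section GramMatrices

variable {n : ℕ}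

/-- The Gram matrices of `n` vectors in `ℤⁿ`; equivalently, the integral quadratic forms that are
sums of squares of `n` integral linear forms. -/
def IsGram (A : Matrix (Fin n) (Fin n) ℤ) : Prop := ∃ B : Matrix (Fin n) (Fin n) ℤ, Bᵀ * B = A

theorem IsGram.of_conj {A U : Matrix (Fin n) (Fin n) ℤ} (hU : U.det = 1)
    (h : IsGram (Uᵀ * A * U)) : IsGram A := by
  obtain ⟨B, hB⟩ := h
  have hinv : U * U⁻¹ = 1 := mul_nonsing_inv U (hU ▸ isUnit_one)
  refine ⟨B * U⁻¹, ?_⟩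
  calc (B * U⁻¹)ᵀ * (B * U⁻¹) = (U⁻¹)ᵀ * (Bᵀ * B) * U⁻¹ := by
        simp only [transpose_mul, Matrix.mul_assoc]
    _ = (U * U⁻¹)ᵀ * A * (U * U⁻¹) := by rw [hB]; simp only [transpose_mul, Matrix.mul_assoc]
    _ = A := by rw [hinv, transpose_one, Matrix.one_mul, Matrix.mul_one]

theorem det_conj_of_det_eq_one (A : Matrix (Fin n) (Fin n) ℤ) {U : Matrix (Fin n) (Fin n) ℤ}
    (hU : U.det = 1) : (Uᵀ * A * U).det = A.det := by
  rw [det_mul, det_mul, det_transpose, hU, one_mul, mul_one]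

theorem posDef_conj_of_det_eq_one {A U : Matrix (Fin n) (Fin n) ℤ} (hA : A.PosDef)
    (hU : U.det = 1) : (Uᵀ * A * U).PosDef := by
  rw [← conjTranspose_eq_transpose_of_trivial]
  refine hA.conjTranspose_mul_mul_same (mulVec_injective_of_isUnit ?_)
  rw [isUnit_iff_isUnit_det, hU]
  exact isUnit_one

/-- The form that remains after completing the square in the first variable, i.e. the Schur
complement of the top left entry, multiplied by that entry to keep it integral. -/
def schurForm (A : Matrix (Fin (n + 1)) (Fin (n + 1)) ℤ) : Matrix (Fin n) (Fin n) ℤ :=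
  A 0 0 • A.submatrix Fin.succ Fin.succ - vecMulVec (vecTail (A 0)) (vecTail (A 0))

theorem schurForm_apply (A : Matrix (Fin (n + 1)) (Fin (n + 1)) ℤ) (i j : Fin n) :
    schurForm A i j = A 0 0 * A i.succ j.succ - A 0 i.succ * A 0 j.succ := rfl

theorem det_schurForm_fin_two {A : Matrix (Fin 2) (Fin 2) ℤ} (hA : A.IsSymm) :
    (schurForm A).det = A.det := by
  rw [det_unique, det_fin_two, schurForm_apply, hA.apply 0 1]
  rfl

theorem det_schurForm_fin_three {A : Matrix (Fin 3) (Fin 3) ℤ} (hA : A.IsSymm) :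
    (schurForm A).det = A 0 0 * A.det := by
  rw [det_fin_two, det_fin_three, hA.apply 0 1, hA.apply 0 2, hA.apply 1 2]
  simp only [schurForm_apply, Fin.succ_zero_eq_one, Fin.succ_one_eq_two, hA.apply 1 2]
  ring

theorem mul_dotProduct_mulVec_vecCons {A : Matrix (Fin (n + 1)) (Fin (n + 1)) ℤ} (hA : A.IsSymm)
    (k : ℤ) (y : Fin n → ℤ) :
    A 0 0 * (vecCons k y ⬝ᵥ A *ᵥ vecCons k y) =
      (A 0 0 * k + vecTail (A 0) ⬝ᵥ y) ^ 2 + y ⬝ᵥ schurForm A *ᵥ y := by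
  have hhead : vecHead (A *ᵥ vecCons k y) = A 0 0 * k + vecTail (A 0) ⬝ᵥ y :=
    dotProduct_cons ..
  have htail : vecTail (A *ᵥ vecCons k y) =
      k • vecTail (A 0) + A.submatrix Fin.succ Fin.succ *ᵥ y := by
    ext i
    have hrow : vecTail (A *ᵥ vecCons k y) i = A i.succ 0 * k + vecTail (A i.succ) ⬝ᵥ y :=
      dotProduct_cons ..
    rw [hrow, hA.apply 0 i.succ, mul_comm]
    rfl
  rw [cons_dotProduct, hhead, htail]
  simp only [schurForm, sub_mulVec, smul_mulVec, vecMulVec_mulVec, dotProduct_add, dotProduct_sub,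
    dotProduct_smul, smul_eq_mul, op_smul_eq_smul, dotProduct_comm y (vecTail (A 0))]
  ring

theorem posDef_iff_schurForm {A : Matrix (Fin (n + 1)) (Fin (n + 1)) ℤ} (hA : A.IsSymm) :
    A.PosDef ↔ 0 < A 0 0 ∧ (schurForm A).PosDef := by
  have hsymm : (schurForm A).IsHermitian := by
    rw [isHermitian_iff_isSymm]
    refine IsSymm.sub (.smul (hA.submatrix _) _) ?_
    rw [IsSymm, transpose_vecMulVec]
  simp only [posDef_iff_dotProduct_mulVec, isHermitian_iff_isSymm.2 hA, hsymm, true_and,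
    star_trivial]
  constructor
  · intro h
    have ha : 0 < A 0 0 := by simpa using h (x := Pi.single 0 1) (by simp)
    refine ⟨ha, fun y hy ↦ ?_⟩
    have hpos := h (x := vecCons (-(vecTail (A 0) ⬝ᵥ y)) (A 0 0 • y)) fun h0 ↦
      hy ((smul_eq_zero_iff_right ha.ne').1 (congrArg vecTail h0))
    have hsq := mul_dotProduct_mulVec_vecCons hA (-(vecTail (A 0) ⬝ᵥ y)) (A 0 0 • y)
    rw [dotProduct_smul, smul_eq_mul, mul_neg, neg_add_cancel, mulVec_smul, smul_dotProduct,
      dotProduct_smul, smul_eq_mul, smul_eq_mul] at hsq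
    have := mul_pos ha hpos
    have h2 : 0 < A 0 0 * (A 0 0 * (y ⬝ᵥ schurForm A *ᵥ y)) := by linarith
    exact pos_of_mul_pos_right (pos_of_mul_pos_right h2 ha.le) ha.le
  · rintro ⟨ha, h⟩ x hx
    refine pos_of_mul_pos_right ?_ ha.le (a := A 0 0)
    rw [← cons_head_tail x, mul_dotProduct_mulVec_vecCons hA]
    by_cases hy : vecTail x = 0
    · have hk : vecHead x ≠ 0 := fun hk ↦ hx <| by
        rw [← cons_head_tail x, hk, hy, cons_zero_zero]
      have := mul_ne_zero ha.ne' hk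
      simp only [hy, dotProduct_zero, mulVec_zero, add_zero]
      positivity
    · exact add_pos_of_nonneg_of_pos (sq_nonneg _) (h hy)

theorem isGram_of_isGram_schurForm {A : Matrix (Fin (n + 1)) (Fin (n + 1)) ℤ} (hA : A.IsSymm)
    (h1 : A 0 0 = 1) (h : IsGram (schurForm A)) : IsGram A := by
  obtain ⟨C, hC⟩ := h
  refine ⟨of (vecCons (A 0) fun i ↦ vecCons 0 (C i)), ?_⟩
  have hC' (i j : Fin n) : (Cᵀ * C) i j = A i.succ j.succ - A 0 i.succ * A 0 j.succ := by
    rw [hC, schurForm, h1, one_smul]; rfl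
  ext i j
  rw [mul_apply, Fin.sum_univ_succ]
  refine Fin.cases ?_ (fun i ↦ ?_) i <;> refine Fin.cases ?_ (fun j ↦ ?_) j
  · simp [h1]
  · simp [h1]
  · simp [h1, hA.apply 0 i.succ]
  · have := hC' i j
    rw [mul_apply] at this
    simp only [transpose_apply, of_apply, cons_val_zero, cons_val_succ] at this ⊢
    rw [this, add_sub_cancel]

/-- The top left entry of `A` is the smallest value at a vector of a `ℤ`-basis of `ℤⁿ⁺¹`. -/
def IsMinimalForm (A : Matrix (Fin (n + 1)) (Fin (n + 1)) ℤ) : Prop :=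
  ∀ U : Matrix (Fin (n + 1)) (Fin (n + 1)) ℤ, U.det = 1 → A 0 0 ≤ Uᵀ 0 ⬝ᵥ A *ᵥ Uᵀ 0

theorem exists_isMinimalForm_conj {A : Matrix (Fin (n + 1)) (Fin (n + 1)) ℤ} (hA : A.PosDef) :
    ∃ U : Matrix (Fin (n + 1)) (Fin (n + 1)) ℤ, U.det = 1 ∧ IsMinimalForm (Uᵀ * A * U) := by
  obtain ⟨U, hU, hmin⟩ := exists_minimalFor_of_wellFoundedLT
    (fun U : Matrix (Fin (n + 1)) (Fin (n + 1)) ℤ ↦ U.det = 1)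
    (fun U ↦ ((Uᵀ * A * U) 0 0).toNat) ⟨1, det_one⟩
  refine ⟨U, hU, fun V hV ↦ ?_⟩
  have hUV : (U * V).det = 1 := by rw [det_mul, hU, hV, one_mul]
  have hconj : Vᵀ * (Uᵀ * A * U) * V = (U * V)ᵀ * A * (U * V) := by
    simp only [transpose_mul, Matrix.mul_assoc]
  have hpos := (posDef_conj_of_det_eq_one hA hUV).diag_pos (i := 0)
  have hle := not_lt_iff_le_imp_ge.2 (hmin hUV)
  rw [← mul_mul_apply, hconj]
  lia

theorem IsMinimalForm.three_mul_sq_le {A : Matrix (Fin (n + 1)) (Fin (n + 1)) ℤ}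
    (hA : A.PosDef) (hmin : IsMinimalForm A) {y : Fin n → ℤ}
    (hy : ∀ k, ∃ U : Matrix (Fin (n + 1)) (Fin (n + 1)) ℤ, U.det = 1 ∧ Uᵀ 0 = vecCons k y) :
    3 * A 0 0 ^ 2 ≤ 4 * (y ⬝ᵥ schurForm A *ᵥ y) := by
  have ha := hA.diag_pos (i := 0)
  obtain ⟨k, hk⟩ := exists_four_mul_sq_le (vecTail (A 0) ⬝ᵥ y) ha
  obtain ⟨U, hU, hcol⟩ := hy k
  have hle := mul_le_mul_of_nonneg_left (hmin U hU) ha.le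
  rw [hcol, mul_dotProduct_mulVec_vecCons (isHermitian_iff_isSymm.1 hA.isHermitian)] at hle
  linarith

theorem IsMinimalForm.three_mul_sq_le_four_mul_det {A : Matrix (Fin 2) (Fin 2) ℤ} (hA : A.PosDef)
    (hmin : IsMinimalForm A) : 3 * A 0 0 ^ 2 ≤ 4 * A.det := by
  have h := hmin.three_mul_sq_le hA (y := ![1]) fun k ↦ ⟨!![k, -1; 1, 0], by simp, by
    ext i; fin_cases i <;> rfl⟩
  rw [← det_schurForm_fin_two (isHermitian_iff_isSymm.1 hA.isHermitian), det_unique]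
  simpa [mulVec, dotProduct] using h

theorem exists_det_eq_one_col_eq_vecCons {V : Matrix (Fin 2) (Fin 2) ℤ} (hV : V.det = 1) (k : ℤ) :
    ∃ U : Matrix (Fin 3) (Fin 3) ℤ, U.det = 1 ∧ Uᵀ 0 = vecCons k (Vᵀ 0) := by
  refine ⟨!![k, -1, 0; V 0 0, 0, V 0 1; V 1 0, 0, V 1 1], ?_, ?_⟩
  · rw [det_fin_two] at hV
    simp only [det_fin_three, of_apply, cons_val', cons_val_zero, cons_val_fin_one, cons_val_one,
      cons_val]
    linarith
  · ext i; fin_cases i <;> rfl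

theorem IsMinimalForm.pow_three_le_mul_det {A : Matrix (Fin 3) (Fin 3) ℤ} (hA : A.PosDef)
    (hmin : IsMinimalForm A) : 27 * A 0 0 ^ 3 ≤ 64 * A.det := by
  have hsymm := isHermitian_iff_isSymm.1 hA.isHermitian
  obtain ⟨ha, hschur⟩ := (posDef_iff_schurForm hsymm).1 hA
  obtain ⟨V, hV, hVmin⟩ := exists_isMinimalForm_conj hschur
  have h3 := hmin.three_mul_sq_le hA (exists_det_eq_one_col_eq_vecCons hV)
  have h2 := hVmin.three_mul_sq_le_four_mul_det (posDef_conj_of_det_eq_one hschur hV)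
  rw [det_conj_of_det_eq_one _ hV, det_schurForm_fin_three hsymm, mul_mul_apply] at h2
  set μ := Vᵀ 0 ⬝ᵥ schurForm A *ᵥ Vᵀ 0
  have h4 : (3 * A 0 0 ^ 2) ^ 2 ≤ (4 * μ) ^ 2 := pow_le_pow_left₀ (by positivity) h3 2
  refine le_of_mul_le_mul_left ?_ ha
  linarith

theorem isGram_of_forall_isMinimalForm
    (h : ∀ A : Matrix (Fin (n + 1)) (Fin (n + 1)) ℤ,
      A.PosDef → A.det = 1 → IsMinimalForm A → IsGram A)
    {A : Matrix (Fin (n + 1)) (Fin (n + 1)) ℤ} (hA : A.PosDef) (hdet : A.det = 1) : IsGram A := by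
  obtain ⟨U, hU, hmin⟩ := exists_isMinimalForm_conj hA
  exact .of_conj hU (h _ (posDef_conj_of_det_eq_one hA hU)
    ((det_conj_of_det_eq_one A hU).trans hdet) hmin)

theorem isGram_of_det_eq_one_fin_two {A : Matrix (Fin 2) (Fin 2) ℤ} (hA : A.PosDef)
    (hdet : A.det = 1) : IsGram A := by
  refine isGram_of_forall_isMinimalForm (fun A hA hdet hmin ↦ ?_) hA hdet
  have hsymm := isHermitian_iff_isSymm.1 hA.isHermitian
  have h1 : A 0 0 = 1 := by
    have := hmin.three_mul_sq_le_four_mul_det hA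
    have := hA.diag_pos (i := 0)
    nlinarith
  have hschur : schurForm A = 1 := by
    rw [← det_schurForm_fin_two hsymm, det_unique] at hdet
    ext i j
    rw [Subsingleton.elim i default, Subsingleton.elim j default, hdet, one_apply_eq]
  exact isGram_of_isGram_schurForm hsymm h1 ⟨1, by rw [hschur, transpose_one, one_mul]⟩

theorem isGram_of_det_eq_one_fin_three {A : Matrix (Fin 3) (Fin 3) ℤ} (hA : A.PosDef)
    (hdet : A.det = 1) : IsGram A := by
  refine isGram_of_forall_isMinimalForm (fun A hA hdet hmin ↦ ?_) hA hdet
  have hsymm := isHermitian_iff_isSymm.1 hA.isHermitian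
  obtain ⟨ha, hschur⟩ := (posDef_iff_schurForm hsymm).1 hA
  have h1 : A 0 0 = 1 := by
    have := hmin.pow_three_le_mul_det hA
    by_contra hne
    have := pow_le_pow_left₀ (by lia) (show 2 ≤ A 0 0 by lia) 3
    lia
  refine isGram_of_isGram_schurForm hsymm h1 (isGram_of_det_eq_one_fin_two hschur ?_)
  rw [det_schurForm_fin_three hsymm, h1, hdet, one_mul]

end GramMatrices

theorem posDef_of_det_pos_fin_two {A : Matrix (Fin 2) (Fin 2) ℤ} (hA : A.IsSymm) (ha : 0 < A 0 0)
    (hdet : 0 < A.det) : A.PosDef := by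
  have hschur : schurForm A = diagonal fun _ ↦ A.det := by
    ext i j
    rw [← det_schurForm_fin_two hA, det_unique, Subsingleton.elim j i, diagonal_apply_eq,
      Subsingleton.elim i default]
  rw [posDef_iff_schurForm hA, hschur, posDef_diagonal_iff]
  exact ⟨ha, fun _ ↦ hdet⟩

/-- `m` is the squared length of a primitive vector of `ℤ³`. -/
def IsPrimitiveSumThreeSq (m : ℤ) : Prop :=
  ∃ x : Fin 3 → ℤ, x ⬝ᵥ x = m ∧ ∀ d, (∀ i, d ∣ x i) → IsUnit d

theorem isPrimitiveSumThreeSq_of_isGram {A : Matrix (Fin 3) (Fin 3) ℤ} (hA : IsGram A)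
    {i j : Fin 3} (hij : A i j = 1) : IsPrimitiveSumThreeSq (A j j) := by
  obtain ⟨B, rfl⟩ := hA
  refine ⟨Bᵀ j, rfl, fun d hd ↦ isUnit_of_dvd_one ?_⟩
  rw [← hij, mul_apply]
  exact Finset.dvd_sum fun k _ ↦ (hd k).mul_left (Bᵀ i k)

theorem isPrimitiveSumThreeSq_of_dvd {m d b : ℤ} (hd : 0 < d) (hdm : 1 < d * m)
    (h : d * m - 1 ∣ b ^ 2 + d) : IsPrimitiveSumThreeSq m := by
  obtain ⟨a, ha⟩ := h
  have ha0 : 0 < a :=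
    pos_of_mul_pos_right (by rw [← ha]; positivity : 0 < (d * m - 1) * a) (by lia)
  let A : Matrix (Fin 3) (Fin 3) ℤ := !![a, b, 1; b, d * m - 1, 0; 1, 0, m]
  have hsymm : A.IsSymm := by ext i j; fin_cases i <;> fin_cases j <;> rfl
  have hdet : A.det = 1 := by
    simp only [A, det_fin_three, of_apply, cons_val', cons_val_zero, cons_val_fin_one, cons_val_one,
      cons_val]
    linear_combination -m * ha
  have hschur : schurForm A = !![d, -b; -b, a * m - 1] := by
    have h00 : a * (d * m - 1) - b * b = d := by linear_combination -ha
    ext i j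
    fin_cases i <;> fin_cases j <;> simp [A, schurForm_apply, h00]
  have hpos : A.PosDef := by
    refine (posDef_iff_schurForm hsymm).2 ⟨ha0, posDef_of_det_pos_fin_two ?_ ?_ ?_⟩
    · rw [hschur]; ext i j; fin_cases i <;> fin_cases j <;> rfl
    · rwa [hschur]
    · rw [det_schurForm_fin_three hsymm, hdet, mul_one]
      exact ha0
  exact isPrimitiveSumThreeSq_of_isGram (isGram_of_det_eq_one_fin_three hpos hdet)
    (i := 0) (j := 2) rfl

theorem exists_dvd_sq_add_of_jacobiSym {q : ℕ} (hq : q.Prime) {d : ℤ} (h : J(-d | q) = 1) :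
    ∃ b : ℤ, (q : ℤ) ∣ b ^ 2 + d := by
  have : Fact q.Prime := ⟨hq⟩
  obtain ⟨r, hr⟩ := ZMod.isSquare_of_jacobiSym_eq_one h
  refine ⟨r.valMinAbs, ?_⟩
  rw [← ZMod.intCast_zmod_eq_zero_iff_dvd]
  push_cast at hr ⊢
  linear_combination -hr

theorem exists_two_mul_dvd_sq_add {q b d : ℤ} (hq : Odd q) (hd : Odd d) (h : q ∣ b ^ 2 + d) :
    ∃ b, 2 * q ∣ b ^ 2 + d := by
  obtain ⟨c, hc, hcodd⟩ : ∃ c, q ∣ c ^ 2 + d ∧ Odd c := by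
    rcases Int.even_or_odd b with hb | hb
    · refine ⟨b + q, ?_, hb.add_odd hq⟩
      rw [show (b + q) ^ 2 + d = b ^ 2 + d + q * (2 * b + q) by ring]
      exact dvd_add h (dvd_mul_right q _)
    · exact ⟨b, h, hb⟩
  exact ⟨c, (Int.isCoprime_two_left.2 hq).mul_dvd (hcodd.pow.add_odd hd).two_dvd hc⟩

theorem jacobiSym_neg_eq_swap {q d : ℕ} (hq : Odd q) (hd : Odd d) (h : q % 4 = 1 ∨ d % 4 = 3) :
    J(-d | q) = J(q | d) := by
  rw [jacobiSym.neg _ hq]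
  rcases Nat.odd_mod_four_iff.1 (Nat.odd_iff.1 hq) with hq4 | hq4
  · rw [ZMod.χ₄_nat_one_mod_four hq4, one_mul,
      jacobiSym.quadratic_reciprocity_one_mod_four' hd hq4]
  · rw [ZMod.χ₄_nat_three_mod_four hq4,
      jacobiSym.quadratic_reciprocity_three_mod_four (by lia) hq4, neg_one_mul, neg_neg]

theorem exists_prime_eq_mul_add {a m : ℕ} (hm : m ≠ 0) (h : a.Coprime m) :
    ∃ q j : ℕ, q.Prime ∧ q = m * j + a := by
  obtain ⟨q, hlt, hq, hmod⟩ := Nat.forall_exists_prime_gt_and_modEq a hm h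
  obtain ⟨j, hj⟩ := (Nat.modEq_iff_dvd' hlt.le).1 hmod.symm
  exact ⟨q, j, hq, by lia⟩

theorem isPrimitiveSumThreeSq_of_mod_four_eq_two {m : ℕ} (hm : m % 4 = 2) :
    IsPrimitiveSumThreeSq m := by
  have hcop : (m - 1).Coprime (4 * m) := by
    refine .mul_right (.pow_right 2 (Nat.coprime_two_right.2 (Nat.odd_iff.2 (by lia)))) ?_
    exact (Nat.coprime_self_sub_left (by lia)).2 (Nat.coprime_one_left m)
  obtain ⟨q, j, hq, hqj⟩ := exists_prime_eq_mul_add (by lia) hcop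
  rw [mul_assoc] at hqj
  have hqd : ((4 * j + 1 : ℕ) : ℤ) * m = q + 1 := by
    zify [show 1 ≤ m by lia] at hqj ⊢
    linear_combination -hqj
  have hd : Odd (4 * j + 1) := Nat.odd_iff.2 (by lia)
  have hJ : J(-(4 * j + 1 : ℕ) | q) = 1 := by
    rw [jacobiSym_neg_eq_swap (Nat.odd_iff.2 (by lia)) hd (.inl (by lia)),
      jacobiSym.mod_left' (Int.modEq_iff_dvd.2 ⟨-m, by linarith⟩ : (q : ℤ) ≡ -1 [ZMOD _]),
      jacobiSym.at_neg_one hd, ZMod.χ₄_nat_one_mod_four (by lia)]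
  obtain ⟨b, hb⟩ := exists_dvd_sq_add_of_jacobiSym hq hJ
  have := hq.pos
  refine isPrimitiveSumThreeSq_of_dvd (d := (4 * j + 1 : ℕ)) (b := b) (by lia) (by lia) ?_
  rwa [hqd, add_sub_cancel_right]

theorem isPrimitiveSumThreeSq_of_two_mul_prime {m d q : ℕ} (hq : q.Prime)
    (hd : d % 8 = 1 ∨ d % 8 = 3) (hqd : q % 4 = 1 ∨ q % 4 = 3 ∧ d % 4 = 3)
    (h : d * m = 2 * q + 1) : IsPrimitiveSumThreeSq m := by
  have hqodd : Odd q := Nat.odd_iff.2 (by lia)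
  have hdodd : Odd d := Nat.odd_iff.2 (by lia)
  have hdm : (d : ℤ) * m = 2 * q + 1 := by exact_mod_cast h
  have hneg_two : J(-2 | d) = 1 := by
    rw [jacobiSym.at_neg_two hdodd, ZMod.χ₈'_nat_eq_if_mod_eight]
    grind
  have hmul : J(-2 * (q : ℤ) | d) = 1 := by
    rw [jacobiSym.mod_left' (Int.modEq_iff_dvd.2 ⟨m, by linarith⟩ : -2 * (q : ℤ) ≡ 1 [ZMOD _]),
      jacobiSym.one_left]
  rw [jacobiSym.mul_left, hneg_two, one_mul,
    ← jacobiSym_neg_eq_swap hqodd hdodd (hqd.imp_right And.right)] at hmul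
  obtain ⟨b₀, hb₀⟩ := exists_dvd_sq_add_of_jacobiSym hq hmul
  obtain ⟨b, hb⟩ := exists_two_mul_dvd_sq_add hqodd.natCast hdodd.natCast hb₀
  have := hq.pos
  refine isPrimitiveSumThreeSq_of_dvd (d := d) (b := b) (by lia) (by lia) ?_
  rwa [hdm, add_sub_cancel_right]

theorem isPrimitiveSumThreeSq_of_odd {m : ℕ}
    (hm : m % 8 = 1 ∨ m % 8 = 3 ∨ m % 8 = 5) : IsPrimitiveSumThreeSq m := by
  obtain ⟨c, l, hc, hl⟩ : ∃ c l : ℕ, (c = 1 ∧ l % 4 = 1 ∨ c = 3 ∧ l % 2 = 1) ∧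
      c * m = 2 * l + 1 := by
    rcases hm with h | h | h
    · exact ⟨3, (3 * m - 1) / 2, by lia⟩
    · exact ⟨1, (m - 1) / 2, by lia⟩
    · exact ⟨3, (3 * m - 1) / 2, by lia⟩
  have hcop : l.Coprime (4 * m) := by
    refine .mul_right (.pow_right 2 (Nat.coprime_two_right.2 (Nat.odd_iff.2 (by lia)))) ?_
    have hcop : IsCoprime (l : ℤ) m := ⟨-2, c, by zify at hl; linarith⟩
    exact Nat.isCoprime_iff_coprime.1 hcop
  obtain ⟨q, j, hq, hqj⟩ := exists_prime_eq_mul_add (by lia) hcop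
  refine isPrimitiveSumThreeSq_of_two_mul_prime (d := 8 * j + c) hq (by lia) ?_ ?_
  · rw [mul_assoc] at hqj
    lia
  · rw [hqj, add_mul, hl]
    ring

section Anisotropy

variable {F : Type*} [Field F]

theorem eq_zero_of_sq_add_sq_eq_zero (hF : ¬IsSquare (-1 : F)) {a b : F} (h : a ^ 2 + b ^ 2 = 0) :
    b = 0 := by
  by_contra hb
  exact hF ⟨a / b, by field_simp; linear_combination -h⟩

-- On the plane `w⊥` the vector product with `w` is, up to scaling, a square root of `-1`.
theorem eq_zero_of_dotProduct_eq_zero (hF : ¬IsSquare (-1 : F)) {w x : Fin 3 → F}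
    (hw : IsSquare (w ⬝ᵥ w)) (hw0 : w ⬝ᵥ w ≠ 0) (hwx : w ⬝ᵥ x = 0) (hxx : x ⬝ᵥ x = 0) : x = 0 := by
  obtain ⟨r, hr⟩ := hw
  rw [hr] at hw0
  simp only [vec3_dotProduct] at hr hwx hxx
  have hsq (i : Fin 3) : (w ⨯₃ x) i ^ 2 + (r * x i) ^ 2 = 0 := by
    rw [mul_pow, sq r, ← hr]
    rw [cross_apply]
    fin_cases i <;> simp only [Fin.zero_eta, Fin.mk_one, Fin.reduceFinMk, cons_val_zero,
      cons_val_one, cons_val]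
    · linear_combination (w 0 * x 0 - w 1 * x 1 - w 2 * x 2) * hwx + (w 1 ^ 2 + w 2 ^ 2) * hxx
    · linear_combination (w 1 * x 1 - w 0 * x 0 - w 2 * x 2) * hwx + (w 0 ^ 2 + w 2 ^ 2) * hxx
    · linear_combination (w 2 * x 2 - w 0 * x 0 - w 1 * x 1) * hwx + (w 0 ^ 2 + w 1 ^ 2) * hxx
  funext i
  exact (mul_eq_zero.1 (eq_zero_of_sq_add_sq_eq_zero hF (hsq i))).resolve_left
    (left_ne_zero_of_mul hw0)

theorem dotProduct_removeNth {R : Type*} [Ring R] {n : ℕ} (i : Fin (n + 1))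
    (v x : Fin (n + 1) → R) :
    i.removeNth v ⬝ᵥ i.removeNth x = v ⬝ᵥ x - v i * x i := by
  rw [dotProduct, dotProduct, Fin.sum_univ_succAbove _ i, add_sub_cancel_left]
  rfl

theorem apply_ne_zero_of_dotProduct_eq_zero (hF : ¬IsSquare (-1 : F)) {v x : Fin 4 → F} {i : Fin 4}
    (hv : IsSquare (v ⬝ᵥ v - v i ^ 2)) (hv0 : v ⬝ᵥ v - v i ^ 2 ≠ 0) (hvx : v ⬝ᵥ x = 0)
    (hxx : x ⬝ᵥ x = 0) (hx : x ≠ 0) : x i ≠ 0 := by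
  intro hi
  rw [sq, ← dotProduct_removeNth] at hv hv0
  have hrem : i.removeNth x = 0 := eq_zero_of_dotProduct_eq_zero hF hv hv0
    (by rw [dotProduct_removeNth, hvx, hi, mul_zero, sub_zero])
    (by rw [dotProduct_removeNth, hxx, hi, mul_zero, sub_zero])
  refine hx (funext fun j ↦ ?_)
  obtain rfl | ⟨k, rfl⟩ := i.eq_self_or_eq_succAbove j
  · exact hi
  · exact congrFun hrem k

end Anisotropy

section QuaternionFactors

variable {R : Type*} [CommRing R]

theorem normSq_eq_dotProduct (q : ℍ[R]) :
    normSq q = Quaternion.equivTuple R q ⬝ᵥ Quaternion.equivTuple R q := by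
  simp [normSq_def', dotProduct, Fin.sum_univ_four, sq]

theorem re_mul_star (x v : ℍ[R]) :
    (x * star v).re = Quaternion.equivTuple R v ⬝ᵥ Quaternion.equivTuple R x := by
  simp [dotProduct, Fin.sum_univ_four, re_mul, mul_comm]

theorem equivTuple_mul_symm_apply (q : ℍ[R]) (v : Fin 4 → R) :
    Quaternion.equivTuple R (q * (Quaternion.equivTuple R).symm v) =
      ![q.re * v 0 - q.imI * v 1 - q.imJ * v 2 - q.imK * v 3,
        q.re * v 1 + q.imI * v 0 + q.imJ * v 3 - q.imK * v 2,
        q.re * v 2 - q.imI * v 3 + q.imJ * v 0 + q.imK * v 1,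
        q.re * v 3 + q.imI * v 2 - q.imJ * v 1 + q.imK * v 0] := by
  obtain ⟨v, rfl⟩ := (Quaternion.equivTuple R).surjective v
  rw [Equiv.symm_apply_apply, equivTuple_apply, re_mul, imI_mul, imJ_mul, imK_mul]
  rfl

theorem exists_eq_mul_star {q v : ℍ[ℤ]} (hv : normSq v ≠ 0)
    (h : ∀ i, normSq v ∣ Quaternion.equivTuple ℤ (q * v) i) : ∃ x, q = x * star v := by
  choose a ha using h
  have hx := congrFun ((Quaternion.equivTuple ℤ).apply_symm_apply a)
  set x := (Quaternion.equivTuple ℤ).symm a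
  have hqv : q * v = normSq v • x := by
    apply (Quaternion.equivTuple ℤ).injective
    funext i
    rw [ha, ← hx]
    fin_cases i <;> rfl
  refine ⟨x, mul_right_cancel₀ (b := v) (normSq_ne_zero.1 hv) ?_⟩
  rw [mul_assoc, star_mul_self, hqv, mul_coe_eq_smul]

theorem exists_eq_mul_star_normSq_eq {q : ℍ[ℤ]} (v : Fin 4 → ℤ) {N : ℤ} (hN : N ≠ 0)
    (hv : v ⬝ᵥ v = N)
    (h : ∀ i, N ∣ Quaternion.equivTuple ℤ (q * (Quaternion.equivTuple ℤ).symm v) i) :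
    ∃ x v' : ℍ[ℤ], q = x * star v' ∧ normSq v' = N := by
  have hnorm : normSq ((Quaternion.equivTuple ℤ).symm v) = N := by
    rw [normSq_eq_dotProduct, Equiv.apply_symm_apply, hv]
  obtain ⟨x, hx⟩ := exists_eq_mul_star (by rwa [hnorm]) (by rwa [hnorm])
  exact ⟨x, _, hx, hnorm⟩

theorem exists_eq_mul_star_normSq_eq_two {q : ℍ[ℤ]} (h : 2 ∣ normSq q) :
    ∃ x v : ℍ[ℤ], q = x * star v ∧ normSq v = 2 := by
  have hpar : (q.re + q.imI + q.imJ + q.imK) % 2 = 0 := by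
    rw [normSq_def'] at h
    simp only [← even_iff_two_dvd, Int.even_add, Int.even_pow, ne_eq, OfNat.ofNat_ne_zero,
      not_false_eq_true, and_true] at h
    simpa only [← Int.even_iff, Int.even_add] using h
  obtain ⟨v, hv, hqv⟩ : ∃ v : Fin 4 → ℤ, v ⬝ᵥ v = 2 ∧
      ∀ i, 2 ∣ Quaternion.equivTuple ℤ (q * (Quaternion.equivTuple ℤ).symm v) i := by
    simp only [equivTuple_mul_symm_apply, Fin.forall_fin_succ]
    obtain hI | hJ | hK : (q.re + q.imI) % 2 = 0 ∨ (q.re + q.imJ) % 2 = 0 ∨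
        (q.re + q.imK) % 2 = 0 := by lia
    · exact ⟨![1, 1, 0, 0], by decide, by simp; lia⟩
    · exact ⟨![1, 0, 1, 0], by decide, by simp; lia⟩
    · exact ⟨![1, 0, 0, 1], by decide, by simp; lia⟩
  exact exists_eq_mul_star_normSq_eq v two_ne_zero hv hqv

theorem exists_eq_mul_star_normSq_eq_five {q : ℍ[ℤ]} (hre : q.re = 0) (h : 5 ∣ normSq q) :
    ∃ x v : ℍ[ℤ], q = x * star v ∧ normSq v = 5 := by
  have hmod : ∀ b c d : ZMod 5, b ^ 2 + c ^ 2 + d ^ 2 = 0 →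
      b = 0 ∧ (d - 2 * c = 0 ∨ d + 2 * c = 0) ∨ c = 0 ∧ (b - 2 * d = 0 ∨ b + 2 * d = 0) ∨
        d = 0 ∧ (c - 2 * b = 0 ∨ c + 2 * b = 0) := by decide
  rw [normSq_def', hre] at h
  have h5 := hmod q.imI q.imJ q.imK (by
    simpa using (ZMod.intCast_zmod_eq_zero_iff_dvd _ 5).2 h)
  norm_cast at h5
  simp only [ZMod.intCast_zmod_eq_zero_iff_dvd, Nat.cast_ofNat] at h5
  obtain ⟨v, hv, hqv⟩ : ∃ v : Fin 4 → ℤ, v ⬝ᵥ v = 5 ∧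
      ∀ i, 5 ∣ Quaternion.equivTuple ℤ (q * (Quaternion.equivTuple ℤ).symm v) i := by
    simp only [equivTuple_mul_symm_apply, Fin.forall_fin_succ]
    obtain ⟨hb, hd | hd⟩ | ⟨hc, hb | hb⟩ | ⟨hd, hc | hc⟩ := h5
    · exact ⟨![1, 2, 0, 0], by decide, by simp; lia⟩
    · exact ⟨![1, -2, 0, 0], by decide, by simp; lia⟩
    · exact ⟨![1, 0, 2, 0], by decide, by simp; lia⟩
    · exact ⟨![1, 0, -2, 0], by decide, by simp; lia⟩
    · exact ⟨![1, 0, 0, 2], by decide, by simp; lia⟩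
    · exact ⟨![1, 0, 0, -2], by decide, by simp; lia⟩
  exact exists_eq_mul_star_normSq_eq v (by norm_num) hv hqv

theorem exists_eq_mul_star_normSq_eq_ten {q : ℍ[ℤ]} (hre : q.re = 0) (h : 10 ∣ normSq q) :
    ∃ x v : ℍ[ℤ], q = x * star v ∧ normSq v = 10 := by
  obtain ⟨y, v, rfl, hv⟩ := exists_eq_mul_star_normSq_eq_five hre (dvd_trans (by norm_num) h)
  rw [map_mul, normSq_star, hv] at h
  obtain ⟨x, w, rfl, hw⟩ := exists_eq_mul_star_normSq_eq_two (q := y) (by lia)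
  exact ⟨x, v * w, by rw [star_mul, mul_assoc], by rw [map_mul, hv, hw]; norm_num⟩

theorem odd_of_four_dvd_normSq {q : ℍ[ℤ]} (hre : Odd q.re) (h : 4 ∣ normSq q) :
    Odd q.imI ∧ Odd q.imJ ∧ Odd q.imK := by
  rw [normSq_def'] at h
  have hsq (a : ℤ) : 4 ∣ a ^ 2 ∧ ¬Odd a ∨ a ^ 2 % 4 = 1 ∧ Odd a := by
    obtain ha | ha := Int.even_or_odd a
    · exact .inl ⟨pow_dvd_pow_of_dvd ha.two_dvd 2, Int.not_odd_iff_even.2 ha⟩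
    · exact .inr ⟨Int.sq_mod_four_eq_one_of_odd ha, ha⟩
  have := hsq q.re
  have := hsq q.imI
  have := hsq q.imJ
  have := hsq q.imK
  lia

theorem exists_eq_mul_star_normSq_eq_four {q : ℍ[ℤ]} (hre : Odd q.re) (h : 4 ∣ normSq q) :
    ∃ x v : ℍ[ℤ], q = x * star v ∧ normSq v = 4 ∧ ∀ i, Quaternion.equivTuple ℤ v i ^ 2 = 1 := by
  have hsign {a : ℤ} (ha : Odd a) : ∃ s k, s ^ 2 = 1 ∧ a = s + 4 * k := by
    rw [Int.odd_iff] at ha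
    obtain h | h : a % 4 = 1 ∨ a % 4 = 3 := by lia
    · exact ⟨1, a / 4, one_pow 2, by lia⟩
    · exact ⟨-1, a / 4 + 1, neg_one_sq, by lia⟩
  obtain ⟨hI, hJ, hK⟩ := odd_of_four_dvd_normSq hre h
  obtain ⟨a, i, ha, hai⟩ := hsign hre
  obtain ⟨b, j, hb, hbj⟩ := hsign hI
  obtain ⟨c, k, hc, hck⟩ := hsign hJ
  obtain ⟨d, l, hd, hdl⟩ := hsign hK
  obtain ⟨v, hv⟩ := (Quaternion.equivTuple ℤ).surjective ![a, -b, -c, -d]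
  obtain ⟨w, hw⟩ := (Quaternion.equivTuple ℤ).surjective ![i, j, k, l]
  have hv1 (n) : Quaternion.equivTuple ℤ v n ^ 2 = 1 := by
    rw [hv]
    fin_cases n
    exacts [ha, (neg_sq b).trans hb, (neg_sq c).trans hc, (neg_sq d).trans hd]
  have hv4 : normSq v = 4 := by
    simp only [normSq_eq_dotProduct, dotProduct, ← sq, hv1]
    rfl
  have hq : q = star v + (4 : ℤ) • w := by
    simp only [equivTuple_apply, vecCons_inj, and_true] at hv hw
    ext <;> simp [*, -zsmul_eq_mul]
  -- As `4 = v * star v`, this is a multiple of `star v`.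
  refine ⟨1 + w * v, v, ?_, hv4, hv1⟩
  rw [hq, add_mul, one_mul, mul_assoc, self_mul_star, hv4, mul_coe_eq_smul]

theorem exists_quaternion_of_isPrimitiveSumThreeSq {m : ℤ} (hm : IsPrimitiveSumThreeSq m) (a : ℤ) :
    ∃ q : ℍ[ℤ], q.re = a ∧ normSq q = a ^ 2 + m ∧
      ∀ d, (∀ i, d ∣ Quaternion.equivTuple ℤ q i) → IsUnit d := by
  obtain ⟨y, rfl, hy⟩ := hm
  obtain ⟨q, hq⟩ := (Quaternion.equivTuple ℤ).surjective (vecCons a y)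
  refine ⟨q, congrFun hq 0, ?_, fun d hd ↦ hy d fun i ↦ ?_⟩
  · rw [normSq_eq_dotProduct, hq, cons_dotProduct_cons, sq]
  · exact (hd i.succ).trans (by rw [hq, cons_val_succ])

end QuaternionFactors

/-- The integer `n` is a sum of `k` squares of integers not divisible by `p`. -/
def IsSumSqNotDvd (p k : ℕ) (n : ℤ) : Prop :=
  ∃ x : Fin k → ℤ, (∀ i, ¬(p : ℤ) ∣ x i) ∧ n = ∑ i, x i ^ 2

theorem isSumSqNotDvd_dotProduct {p k : ℕ} {x : Fin k → ℤ} (hx : ∀ i, ¬(p : ℤ) ∣ x i) :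
    IsSumSqNotDvd p k (x ⬝ᵥ x) :=
  ⟨x, hx, by simp only [dotProduct, sq]⟩

theorem IsSumSqNotDvd.sq_mul {p k : ℕ} (hp : p.Prime) {n c : ℤ} (hc : ¬(p : ℤ) ∣ c)
    (h : IsSumSqNotDvd p k n) : IsSumSqNotDvd p k (c ^ 2 * n) := by
  obtain ⟨x, hx, rfl⟩ := h
  refine ⟨fun i ↦ c * x i, fun i hi ↦ ?_, by simp only [mul_pow, Finset.mul_sum]⟩
  exact ((Nat.prime_iff_prime_int.1 hp).dvd_or_dvd hi).elim hc (hx i)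

theorem not_forall_dvd_of_forall_isUnit {ι : Type*} {p : ℕ} (hp : p.Prime) {x : ι → ℤ}
    (hx : ∀ d, (∀ i, d ∣ x i) → IsUnit d) : ¬∀ i, (p : ℤ) ∣ x i :=
  fun h ↦ (Nat.prime_iff_prime_int.1 hp).not_isUnit (hx p h)

theorem dotProduct_self_emod_eight_ne_seven (x : Fin 3 → ℤ) : x ⬝ᵥ x % 8 ≠ 7 := by
  have hmod : ∀ a b c : ZMod 8, a * a + b * b + c * c ≠ 7 := by decide
  intro h
  have h7 := (ZMod.intCast_eq_intCast_iff' (x ⬝ᵥ x) 7 8).2 h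
  rw [vec3_dotProduct] at h7
  exact hmod (x 0) (x 1) (x 2) (by exact_mod_cast h7)

theorem isSumSqNotDvd_four_of_lt_sq {p n : ℕ} (hn : n % 8 = 7) (hlt : n < p ^ 2) :
    IsSumSqNotDvd p 4 n := by
  obtain ⟨a, b, c, d, h⟩ := Nat.sum_four_squares n
  obtain ⟨x, hx⟩ : ∃ x : Fin 4 → ℤ, x ⬝ᵥ x = n :=
    ⟨![a, b, c, d], by rw [← h]; simp [dotProduct, Fin.sum_univ_four, sq]⟩
  rw [← hx]
  refine isSumSqNotDvd_dotProduct fun i hi ↦ ?_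
  have hle : 0 ≤ i.removeNth x ⬝ᵥ i.removeNth x := by
    simpa using dotProduct_star_self_nonneg (i.removeNth x)
  rw [dotProduct_removeNth, hx] at hle
  have hi0 : x i = 0 := Int.eq_zero_of_abs_lt_dvd hi (abs_lt_of_sq_lt_sq (by
    zify at hlt; lia) (Int.natCast_nonneg p))
  refine dotProduct_self_emod_eight_ne_seven (i.removeNth x) ?_
  rw [dotProduct_removeNth, hx, hi0]
  lia

section ThreeModFour

variable {p : ℕ} [Fact p.Prime]

theorem not_isSquare_neg_one (hp : p % 4 = 3) : ¬IsSquare (-1 : ZMod p) := by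
  rw [ZMod.exists_sq_eq_neg_one_iff]
  exact not_not.2 hp

theorem not_dvd_of_dvd_dotProduct_fin_three (hp : p % 4 = 3) {x : Fin 3 → ℤ}
    (hxx : (p : ℤ) ∣ x ⬝ᵥ x) (hx : ¬∀ i, (p : ℤ) ∣ x i) (i : Fin 3) : ¬(p : ℤ) ∣ x i := by
  simp only [← ZMod.intCast_zmod_eq_zero_iff_dvd] at hxx hx ⊢
  refine fun hi ↦ hx (congrFun (?_ : Int.cast ∘ x = (0 : Fin 3 → ZMod p)))
  refine eq_zero_of_dotProduct_eq_zero (not_isSquare_neg_one hp) (w := Pi.single i 1) ?_ ?_ ?_ ?_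
  · simp
  · simp
  · simpa
  · exact ((Int.castRingHom (ZMod p)).map_dotProduct x x).symm.trans hxx

theorem not_dvd_of_dvd_dotProduct_fin_four (hp : p % 4 = 3) {v x : Fin 4 → ℤ} {i : Fin 4}
    (hv : legendreSym p (v ⬝ᵥ v - v i ^ 2) = 1) (hvx : (p : ℤ) ∣ v ⬝ᵥ x)
    (hxx : (p : ℤ) ∣ x ⬝ᵥ x) (hx : ¬∀ j, (p : ℤ) ∣ x j) : ¬(p : ℤ) ∣ x i := by
  have hcast (a b : Fin 4 → ℤ) :
      (Int.cast ∘ a : Fin 4 → ZMod p) ⬝ᵥ (Int.cast ∘ b) = (a ⬝ᵥ b : ℤ) :=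
    ((Int.castRingHom (ZMod p)).map_dotProduct a b).symm
  have hv0 : ((v ⬝ᵥ v - v i ^ 2 : ℤ) : ZMod p) ≠ 0 := fun h0 ↦ by
    simp [(legendreSym.eq_zero_iff p _).2 h0] at hv
  rw [legendreSym.eq_one_iff p hv0] at hv
  push_cast at hv hv0
  simp only [← ZMod.intCast_zmod_eq_zero_iff_dvd] at hvx hxx hx ⊢
  refine apply_ne_zero_of_dotProduct_eq_zero (not_isSquare_neg_one hp) (v := Int.cast ∘ v)
    (x := Int.cast ∘ x) ?_ ?_ ?_ ?_ fun h0 ↦ hx (congrFun h0) <;>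
  simpa only [hcast]

theorem isSumSqNotDvd_normSq_of_mul_star (hp : p % 4 = 3) {x v : ℍ[ℤ]}
    (hre : (p : ℤ) ∣ (x * star v).re)
    (hxv : ¬∀ i, (p : ℤ) ∣ Quaternion.equivTuple ℤ (x * star v) i) (hx : (p : ℤ) ∣ normSq x)
    (hv : ∀ i, legendreSym p (normSq v - Quaternion.equivTuple ℤ v i ^ 2) = 1) :
    IsSumSqNotDvd p 4 (normSq x) := by
  rw [re_mul_star] at hre
  simp only [normSq_eq_dotProduct] at hx hv ⊢
  refine isSumSqNotDvd_dotProduct fun i ↦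
    not_dvd_of_dvd_dotProduct_fin_four hp (hv i) hre hx fun h ↦ hxv ?_
  choose a ha using h
  obtain ⟨y, rfl⟩ := (Quaternion.equivTuple ℤ).surjective a
  have hxy : x = (p : ℤ) • y := by
    refine (Quaternion.equivTuple ℤ).injective (funext fun j ↦ (ha j).trans ?_)
    fin_cases j <;> rfl
  intro j
  rw [hxy, smul_mul_assoc]
  refine ⟨Quaternion.equivTuple ℤ (y * star v) j, ?_⟩
  fin_cases j <;> rfl

theorem isSumSqNotDvd_of_factor (hp : p % 4 = 3) {N n : ℤ} (hN : N ≠ 0)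
    (hNn : IsPrimitiveSumThreeSq (N * n)) (hpn : (p : ℤ) ∣ n)
    (hfactor : ∀ {q : ℍ[ℤ]}, q.re = 0 → N ∣ normSq q →
      ∃ x v : ℍ[ℤ], q = x * star v ∧ normSq v = N)
    (hleg : ∀ k : ℤ, k ^ 2 ≤ N → legendreSym p (N - k ^ 2) = 1) : IsSumSqNotDvd p 4 n := by
  obtain ⟨q, hre, hnorm, hq⟩ := exists_quaternion_of_isPrimitiveSumThreeSq hNn 0
  rw [zero_pow two_ne_zero, zero_add] at hnorm
  obtain ⟨x, v, rfl, hv⟩ := hfactor hre ⟨n, hnorm⟩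
  obtain rfl : normSq x = n := by
    rw [map_mul, normSq_star, hv, mul_comm] at hnorm
    exact mul_left_cancel₀ hN hnorm
  refine isSumSqNotDvd_normSq_of_mul_star hp (by simp [hre])
    (not_forall_dvd_of_forall_isUnit Fact.out hq) hpn fun i ↦ ?_
  rw [hv]
  refine hleg _ ?_
  rw [← hv, normSq_eq_dotProduct, dotProduct]
  simp only [← sq]
  exact Finset.single_le_sum (f := fun j ↦ Quaternion.equivTuple ℤ v j ^ 2)
    (fun j _ ↦ sq_nonneg _) (Finset.mem_univ i)

theorem isSumSqNotDvd_of_legendreSym_two (hp : p % 4 = 3) (h2 : legendreSym p 2 = 1) {n : ℕ}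
    (hn : n % 8 = 7) (hpn : p ∣ n) : IsSumSqNotDvd p 4 n := by
  have hprim := isPrimitiveSumThreeSq_of_mod_four_eq_two (m := 2 * n) (by lia)
  refine isSumSqNotDvd_of_factor hp two_ne_zero (by exact_mod_cast hprim)
    (Int.natCast_dvd_natCast.2 hpn) (fun _ ↦ exists_eq_mul_star_normSq_eq_two) fun k hk ↦ ?_
  obtain ⟨hlo, hhi⟩ : -1 ≤ k ∧ k ≤ 1 := ⟨by nlinarith, by nlinarith⟩
  interval_cases k <;> norm_num [h2, legendreSym.at_one]

theorem isSumSqNotDvd_of_legendreSym_five (hp : p % 4 = 3) (hp2 : ((2 : ℤ) : ZMod p) ≠ 0)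
    (h5 : legendreSym p 5 = 1) {n : ℕ} (hn : n % 8 = 7) (hpn : p ∣ n) : IsSumSqNotDvd p 4 n := by
  have hprim := isPrimitiveSumThreeSq_of_odd (m := 5 * n) (by lia)
  refine isSumSqNotDvd_of_factor hp (by norm_num) (by exact_mod_cast hprim)
    (Int.natCast_dvd_natCast.2 hpn) exists_eq_mul_star_normSq_eq_five fun k hk ↦ ?_
  have h4 : legendreSym p 4 = 1 := legendreSym.sq_one' p hp2
  obtain ⟨hlo, hhi⟩ : -2 ≤ k ∧ k ≤ 2 := ⟨by nlinarith, by nlinarith⟩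
  interval_cases k <;> norm_num [h4, h5, legendreSym.at_one]

theorem isSumSqNotDvd_of_legendreSym_six_ten (hp : p % 4 = 3) (hp3 : ((3 : ℤ) : ZMod p) ≠ 0)
    (h6 : legendreSym p 6 = 1) (h10 : legendreSym p 10 = 1) {n : ℕ} (hn : n % 8 = 7)
    (hpn : p ∣ n) : IsSumSqNotDvd p 4 n := by
  have hprim := isPrimitiveSumThreeSq_of_mod_four_eq_two (m := 10 * n) (by lia)
  refine isSumSqNotDvd_of_factor hp (by norm_num) (by exact_mod_cast hprim)
    (Int.natCast_dvd_natCast.2 hpn) exists_eq_mul_star_normSq_eq_ten fun k hk ↦ ?_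
  have h9 : legendreSym p 9 = 1 := legendreSym.sq_one' p hp3
  obtain ⟨hlo, hhi⟩ : -3 ≤ k ∧ k ≤ 3 := ⟨by nlinarith, by nlinarith⟩
  interval_cases k <;> norm_num [h6, h9, h10, legendreSym.at_one]

theorem isSumSqNotDvd_of_legendreSym_three (hp : p % 4 = 3) (h3 : legendreSym p 3 = 1) {n : ℕ}
    (hn : n % 8 = 7) (hpn : p ∣ n) : IsSumSqNotDvd p 4 n := by
  obtain hlt | hle := lt_or_ge n (p ^ 2)
  · exact isSumSqNotDvd_four_of_lt_sq hn hlt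
  have hodd : Odd p := Nat.odd_iff.2 (by lia)
  have hp8 : p ^ 2 % 8 = 1 := by
    obtain h | h : p % 8 = 3 ∨ p % 8 = 7 := by lia
    all_goals simp [Nat.pow_mod, h]
  have hprim := isPrimitiveSumThreeSq_of_odd (m := 4 * n - p ^ 2) (by lia)
  obtain ⟨q, hre, hnorm, hq⟩ := exists_quaternion_of_isPrimitiveSumThreeSq hprim p
  replace hnorm : normSq q = 4 * n := by rw [hnorm]; push_cast [show p ^ 2 ≤ 4 * n by lia]; ring
  obtain ⟨x, v, rfl, hv, hv1⟩ :=
    exists_eq_mul_star_normSq_eq_four (by simpa [hre] using hodd) ⟨n, hnorm⟩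
  have hx : normSq x = n := by
    rw [map_mul, normSq_star, hv] at hnorm
    lia
  rw [← hx]
  refine isSumSqNotDvd_normSq_of_mul_star hp (by simp [hre])
    (not_forall_dvd_of_forall_isUnit Fact.out hq) (by rwa [hx, Int.natCast_dvd_natCast]) fun i ↦ ?_
  rw [hv, hv1]
  exact h3

theorem isSumSqNotDvd_four_of_mod_eight_eq_seven (hp : p % 4 = 3) (hp3 : 3 < p) {n : ℕ}
    (hn : n % 8 = 7) (hpn : p ∣ n) : IsSumSqNotDvd p 4 n := by
  have hne (a : ℤ) (ha : 0 < a) (hap : a < p) : (a : ZMod p) ≠ 0 := by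
    rw [ne_eq, ZMod.intCast_zmod_eq_zero_iff_dvd]
    exact fun h ↦ hap.not_ge (Int.le_of_dvd ha h)
  have hne2 := hne 2 (by lia) (by lia)
  have hne3 := hne 3 (by lia) (by lia)
  have hne5 := hne 5 (by lia) (by lia)
  obtain h2 | h2 := legendreSym.eq_one_or_neg_one p hne2
  · exact isSumSqNotDvd_of_legendreSym_two hp h2 hn hpn
  obtain h3 | h3 := legendreSym.eq_one_or_neg_one p hne3
  · exact isSumSqNotDvd_of_legendreSym_three hp h3 hn hpn
  obtain h5 | h5 := legendreSym.eq_one_or_neg_one p hne5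
  · exact isSumSqNotDvd_of_legendreSym_five hp hne2 h5 hn hpn
  have h6 : legendreSym p 6 = 1 := by
    rw [show (6 : ℤ) = 2 * 3 from rfl, legendreSym.mul, h2, h3]
    rfl
  have h10 : legendreSym p 10 = 1 := by
    rw [show (10 : ℤ) = 2 * 5 from rfl, legendreSym.mul, h2, h5]
    rfl
  exact isSumSqNotDvd_of_legendreSym_six_ten hp hne3 h6 h10 hn hpn

theorem isSumSqNotDvd_three_of_isPrimitiveSumThreeSq (hp : p % 4 = 3) {n : ℤ}
    (hn : IsPrimitiveSumThreeSq n) (hpn : (p : ℤ) ∣ n) : IsSumSqNotDvd p 3 n := by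
  obtain ⟨x, rfl, hx⟩ := hn
  exact isSumSqNotDvd_dotProduct
    (not_dvd_of_dvd_dotProduct_fin_three hp hpn (not_forall_dvd_of_forall_isUnit Fact.out hx))

theorem exists_isSumSqNotDvd_of_not_four_dvd (hp : p % 4 = 3) (hp3 : 3 < p) {n : ℕ}
    (hn : ¬4 ∣ n) (hpn : p ∣ n) : ∃ k, (k = 3 ∨ k = 4) ∧ IsSumSqNotDvd p k n := by
  by_cases h7 : n % 8 = 7
  · exact ⟨4, .inr rfl, isSumSqNotDvd_four_of_mod_eight_eq_seven hp hp3 h7 hpn⟩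
  have hprim : IsPrimitiveSumThreeSq n := by
    by_cases h2 : n % 4 = 2
    · exact isPrimitiveSumThreeSq_of_mod_four_eq_two h2
    · exact isPrimitiveSumThreeSq_of_odd (by lia)
  exact ⟨3, .inl rfl,
    isSumSqNotDvd_three_of_isPrimitiveSumThreeSq hp hprim (Int.natCast_dvd_natCast.2 hpn)⟩

end ThreeModFour

theorem divisible_case_three_mod_four (p : ℕ) (hp : p.Prime) (hp3 : p % 4 = 3)
    (hpgt : 3 < p) (n : ℕ) (hn : 0 < n) (hpn : p ∣ n) :
    ∃ k : ℕ, (k = 3 ∨ k = 4) ∧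
      ∃ x : Fin k → ℤ, (∀ i, ¬ (p : ℤ) ∣ x i) ∧ (n : ℤ) = ∑ i, (x i) ^ 2 := by
  have : Fact p.Prime := ⟨hp⟩
  obtain ⟨e, m, hm, rfl⟩ := Nat.exists_eq_pow_mul_and_not_dvd hn.ne' 4 (by norm_num)
  have hpow : 4 ^ e = (2 ^ e) ^ 2 := (pow_right_comm 2 2 e)
  have hp2 : ¬p ∣ 2 ^ e := fun h ↦
    Nat.not_dvd_of_pos_of_lt two_pos (by lia) (hp.dvd_of_dvd_pow h)
  rw [hpow] at hpn ⊢
  have hpm : p ∣ m := (hp.dvd_mul.1 hpn).resolve_left fun h ↦ hp2 (hp.dvd_of_dvd_pow h)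
  obtain ⟨k, hk, hkm⟩ := exists_isSumSqNotDvd_of_not_four_dvd hp3 hpgt hm hpm
  refine ⟨k, hk, ?_⟩
  rw [Nat.cast_mul, Nat.cast_pow]
  exact hkm.sq_mul hp (Int.natCast_dvd_natCast.not.2 hp2)
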